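/- arXiv:1504.08345 — 2 statements merged into one kernel-verified Lean document; each statement's English description precedes it below -/
import Mathlib

section
/- Let k ∈ ℕ₀ and n = 4k+3, and for odd m let T_m(t) = Σ_{i=0}^{(m-1)/2} (-1)^i t^{2i+1}/(2i+1)!. Then for all t ∈ [0, √((n+3)(n+4))] one has T_n(t) ≤ T_{n+4}(t) ≤ sin t, and for all t ∈ [−√((n+3)(n+4)), 0] one has T_n(t) ≥ T_{n+4}(t) ≥ sin t. -/
/-!
On `[0, ∞)` the Maclaurin partial sums of `sin` and `cos` lie alternately above and below the
function: starting from `cos ≤ 1`, integrating from `0` transfers each one-sided bound from `cos` to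
`sin` and from `sin` to the next partial sum of `cos` (`alternating_bounds`). As `n + 4 ≡ 3 (mod 4)`,
the polynomial `T_{n+4}` has an even number of terms, so it lies below `sin`. The difference
`T_{n+4}(t) - T_n(t)` is `t^(n+2)/(n+2)! - t^(n+4)/(n+4)!`, which is nonnegative for
`0 ≤ t ≤ √((n+3)(n+4))`. Negative `t` follows by oddness.
-/

open Finset

/-- Maclaurin polynomial of sin of odd degree `m`:
`T m t = ∑_{i=0}^{(m-1)/2} (-1)^i t^(2i+1)/(2i+1)!`. -/
noncomputable def sinTaylor (m : ℕ) (t : ℝ) : ℝ :=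
  ∑ i ∈ Finset.range ((m - 1) / 2 + 1), (-1 : ℝ) ^ i * t ^ (2 * i + 1) / (2 * i + 1).factorial

/-- The first `N` terms of the Maclaurin series of `sin`. -/
noncomputable def sinPartial (N : ℕ) (t : ℝ) : ℝ :=
  ∑ i ∈ Finset.range N, (-1 : ℝ) ^ i * t ^ (2 * i + 1) / (2 * i + 1).factorial

/-- The first `N` terms of the Maclaurin series of `cos`. -/
noncomputable def cosPartial (N : ℕ) (t : ℝ) : ℝ :=
  ∑ i ∈ Finset.range N, (-1 : ℝ) ^ i * t ^ (2 * i) / (2 * i).factorial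

lemma hasDerivAt_sinPartial (N : ℕ) (t : ℝ) :
    HasDerivAt (sinPartial N) (cosPartial N t) t := by
  unfold sinPartial cosPartial
  refine HasDerivAt.fun_sum fun i _ => ?_
  have h := (((hasDerivAt_pow (2 * i + 1) t).const_mul ((-1 : ℝ) ^ i)).div_const
    ((2 * i + 1).factorial : ℝ))
  refine h.congr_deriv ?_
  have h0 : ((2 * i).factorial : ℝ) ≠ 0 := by positivity
  have h1 : ((2 * i + 1 : ℕ) : ℝ) ≠ 0 := by positivity
  rw [Nat.factorial_succ, Nat.cast_mul, Nat.add_sub_cancel]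
  field_simp

lemma hasDerivAt_cosPartial (N : ℕ) (t : ℝ) :
    HasDerivAt (cosPartial (N + 1)) (-sinPartial N t) t := by
  have e : cosPartial (N + 1) = fun t : ℝ =>
      ∑ i ∈ Finset.range N, (-1 : ℝ) ^ (i + 1) * t ^ (2 * i + 2) / (2 * i + 2).factorial + 1 := by
    funext s
    simp [cosPartial, Finset.sum_range_succ', mul_add]
  rw [e, sinPartial, ← Finset.sum_neg_distrib]
  refine HasDerivAt.add_const _ (HasDerivAt.fun_sum fun i _ => ?_)
  have h := (((hasDerivAt_pow (2 * i + 2) t).const_mul ((-1 : ℝ) ^ (i + 1))).div_const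
    ((2 * i + 2).factorial : ℝ))
  refine h.congr_deriv ?_
  have h0 : ((2 * i + 1).factorial : ℝ) ≠ 0 := by positivity
  have h1 : ((2 * i + 1 + 1 : ℕ) : ℝ) ≠ 0 := by positivity
  rw [show 2 * i + 2 = 2 * i + 1 + 1 from rfl, Nat.factorial_succ, Nat.cast_mul,
    Nat.add_sub_cancel, pow_succ (-1 : ℝ) i]
  field_simp

lemma nonneg_of_deriv_nonneg {f f' : ℝ → ℝ} (hf : ∀ x, HasDerivAt f (f' x) x) (h0 : f 0 = 0)
    (h : ∀ x, 0 ≤ x → 0 ≤ f' x) (t : ℝ) (ht : 0 ≤ t) : 0 ≤ f t := by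
  have hm : MonotoneOn f (Set.Ici 0) := by
    refine monotoneOn_of_deriv_nonneg (convex_Ici 0)
      (fun x _ => (hf x).continuousAt.continuousWithinAt)
      (fun x _ => (hf x).differentiableAt.differentiableWithinAt) fun x hx => ?_
    rw [(hf x).deriv]
    exact h x (interior_subset hx)
  rw [← h0]
  exact hm Set.self_mem_Ici ht ht

lemma sin_step (N : ℕ) (h : ∀ t : ℝ, 0 ≤ t → 0 ≤ (-1 : ℝ) ^ N * (Real.cos t - cosPartial N t)) :
    ∀ t : ℝ, 0 ≤ t → 0 ≤ (-1 : ℝ) ^ N * (Real.sin t - sinPartial N t) :=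
  nonneg_of_deriv_nonneg
    (fun x => ((Real.hasDerivAt_sin x).sub (hasDerivAt_sinPartial N x)).const_mul _)
    (by simp [sinPartial]) h

/-- For `t ≥ 0`, the errors of the partial sums with `N + 1` terms have the sign of the first
omitted term, `(-1) ^ (N + 1)`. -/
lemma alternating_bounds (N : ℕ) :
    (∀ t : ℝ, 0 ≤ t → 0 ≤ (-1 : ℝ) ^ (N + 1) * (Real.cos t - cosPartial (N + 1) t)) ∧
    (∀ t : ℝ, 0 ≤ t → 0 ≤ (-1 : ℝ) ^ (N + 1) * (Real.sin t - sinPartial (N + 1) t)) := by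
  refine (fun h => ⟨h, sin_step _ h⟩ : (∀ t : ℝ, 0 ≤ t → _) → _) ?_
  induction N with
  | zero =>
    intro t _
    simp [cosPartial, Real.cos_le_one]
  | succ N ih =>
    refine nonneg_of_deriv_nonneg
      (fun x => ((Real.hasDerivAt_cos x).sub (hasDerivAt_cosPartial (N + 1) x)).const_mul _)
      (by simp [cosPartial, Finset.sum_range_succ']) fun x hx => ?_
    have := sin_step _ ih x hx
    rw [pow_succ (-1 : ℝ) (N + 1)]
    linarith

lemma sinTaylor_neg (m : ℕ) (t : ℝ) : sinTaylor m (-t) = -sinTaylor m t := by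
  unfold sinTaylor
  rw [← Finset.sum_neg_distrib]
  refine Finset.sum_congr rfl fun i _ => ?_
  rw [Odd.neg_pow ⟨i, rfl⟩]
  ring

lemma bounds_nonneg (k : ℕ) (t : ℝ) (ht : 0 ≤ t)
    (ht2 : t ^ 2 ≤ (((4 * k + 3 : ℕ) : ℝ) + 3) * (((4 * k + 3 : ℕ) : ℝ) + 4)) :
    sinTaylor (4 * k + 3) t ≤ sinTaylor (4 * k + 3 + 4) t ∧
      sinTaylor (4 * k + 3 + 4) t ≤ Real.sin t := by
  have e1 : sinTaylor (4 * k + 3) t = sinPartial (2 * k + 2) t := by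
    rw [sinTaylor, sinPartial, show (4 * k + 3 - 1) / 2 + 1 = 2 * k + 2 by omega]
  have e2 : sinTaylor (4 * k + 3 + 4) t = sinPartial (2 * k + 2 + 2) t := by
    rw [sinTaylor, sinPartial, show (4 * k + 3 + 4 - 1) / 2 + 1 = 2 * k + 2 + 2 by omega]
  rw [e1, e2]
  constructor
  · have d : sinPartial (2 * k + 2 + 2) t - sinPartial (2 * k + 2) t =
        t ^ (4 * k + 5) / (4 * k + 7).factorial *
          ((((4 * k + 3 : ℕ) : ℝ) + 3) * (((4 * k + 3 : ℕ) : ℝ) + 4) - t ^ 2) := by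
      have s1 : (-1 : ℝ) ^ (2 * k + 2) = 1 := Even.neg_one_pow ⟨k + 1, by ring⟩
      have s2 : (-1 : ℝ) ^ (2 * k + 2 + 1) = -1 := Odd.neg_one_pow ⟨k + 1, by ring⟩
      have f : ((4 * k + 7).factorial : ℝ) =
          (4 * k + 7) * ((4 * k + 6) * (4 * k + 5).factorial) := by
        rw [Nat.factorial_succ (4 * k + 6), Nat.factorial_succ (4 * k + 5)]
        push_cast
        ring
      have h0 : ((4 * k + 5).factorial : ℝ) ≠ 0 := by positivity
      have h1 : (4 * k + 7 : ℝ) ≠ 0 := by positivity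
      have h2 : (4 * k + 6 : ℝ) ≠ 0 := by positivity
      unfold sinPartial
      rw [Finset.sum_range_succ, Finset.sum_range_succ, s1, s2,
        show 2 * (2 * k + 2) + 1 = 4 * k + 5 by ring,
        show 2 * (2 * k + 2 + 1) + 1 = 4 * k + 7 by ring, f,
        show t ^ (4 * k + 7) = t ^ (4 * k + 5) * t ^ 2 by rw [← pow_add]]
      push_cast
      field_simp
      ring
    have : 0 ≤ t ^ (4 * k + 5) / (4 * k + 7).factorial *
          ((((4 * k + 3 : ℕ) : ℝ) + 3) * (((4 * k + 3 : ℕ) : ℝ) + 4) - t ^ 2) :=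
      mul_nonneg (by positivity) (by linarith)
    linarith
  · have h := (alternating_bounds (2 * k + 3)).2 t ht
    rw [Even.neg_one_pow ⟨k + 2, by ring⟩, one_mul] at h
    exact sub_nonneg.mp h

theorem stmt_1 (k : ℕ) (n : ℕ) (hn : n = 4 * k + 3) :
    (∀ t ∈ Set.Icc (0 : ℝ) (Real.sqrt (((n : ℝ) + 3) * ((n : ℝ) + 4))),
      sinTaylor n t ≤ sinTaylor (n + 4) t ∧ sinTaylor (n + 4) t ≤ Real.sin t) ∧
    (∀ t ∈ Set.Icc (-Real.sqrt (((n : ℝ) + 3) * ((n : ℝ) + 4))) (0 : ℝ),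
      sinTaylor n t ≥ sinTaylor (n + 4) t ∧ sinTaylor (n + 4) t ≥ Real.sin t) := by
  have key : ∀ t ∈ Set.Icc (0 : ℝ) (Real.sqrt (((n : ℝ) + 3) * ((n : ℝ) + 4))),
      sinTaylor n t ≤ sinTaylor (n + 4) t ∧ sinTaylor (n + 4) t ≤ Real.sin t := by
    subst hn
    exact fun t ht => bounds_nonneg k t ht.1 ((Real.le_sqrt ht.1 (by positivity)).mp ht.2)
  refine ⟨key, fun t ht => ?_⟩
  have h := key (-t) ⟨by linarith [ht.2], by linarith [ht.1]⟩
  rw [sinTaylor_neg, sinTaylor_neg, Real.sin_neg] at h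
  exact ⟨by linarith [h.1], by linarith [h.2]⟩
end

section
/- Let k ∈ ℕ₀ and n = 4k, and for even m let T_m(t) = Σ_{i=0}^{m/2} (-1)^i t^{2i}/(2i)!. Then for all t ∈ [−√((n+3)(n+4)), √((n+3)(n+4))] one has T_n(t) ≥ T_{n+4}(t) ≥ cos t. -/
/-!
On the given interval `t ^ 2 ≤ (n + 3) * (n + 4)`, which is what makes
`T_n(t) - T_{n+4}(t) = t^(n+2)/(n+2)! - t^(n+4)/(n+4)!` nonnegative.

The inequality `cos t ≤ T_{n+4}(t)` holds for every real `t`. As both sides are even, it suffices to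
take `t ≥ 0`, where the Maclaurin polynomials of `cos` and `sin` lie alternately above and below
the function: the error of each polynomial is, up to sign, an antiderivative of the error of the
preceding one and vanishes at `0`, so the signs propagate by induction from `1 - cos t ≥ 0`
(`maclaurin_error_nonneg`).
-/

open Finset

/-- Maclaurin polynomial of cos of even degree `m`:
`T m t = ∑_{i=0}^{m/2} (-1)^i t^(2i)/(2i)!`. -/
noncomputable def cosTaylor (m : ℕ) (t : ℝ) : ℝ :=
  ∑ i ∈ Finset.range (m / 2 + 1), (-1 : ℝ) ^ i * t ^ (2 * i) / (2 * i).factorial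

/-- Maclaurin polynomial of `cos` of degree `2 * m`, indexed by its last summand. -/
noncomputable def cosSum (m : ℕ) (t : ℝ) : ℝ :=
  ∑ i ∈ Finset.range (m + 1), (-1 : ℝ) ^ i * t ^ (2 * i) / (2 * i).factorial

/-- Maclaurin polynomial of `sin` of degree `2 * m + 1`, indexed by its last summand. -/
noncomputable def sinSum (m : ℕ) (t : ℝ) : ℝ :=
  ∑ i ∈ Finset.range (m + 1), (-1 : ℝ) ^ i * t ^ (2 * i + 1) / (2 * i + 1).factorial

lemma hasDerivAt_pow_succ_div_factorial (j : ℕ) (t : ℝ) :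
    HasDerivAt (fun x : ℝ => x ^ (j + 1) / (j + 1).factorial) (t ^ j / j.factorial) t := by
  refine ((hasDerivAt_pow (j + 1) t).div_const ((j + 1).factorial : ℝ)).congr_deriv ?_
  rw [Nat.factorial_succ]
  push_cast
  field_simp

lemma hasDerivAt_sinSum (m : ℕ) (t : ℝ) : HasDerivAt (sinSum m) (cosSum m t) t := by
  unfold sinSum cosSum
  refine HasDerivAt.fun_sum fun i _ => ?_
  simpa only [mul_div_assoc] using
    (hasDerivAt_pow_succ_div_factorial (2 * i) t).const_mul ((-1 : ℝ) ^ i)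

lemma cosSum_succ_eq (m : ℕ) (t : ℝ) :
    cosSum (m + 1) t = 1 + ∑ i ∈ Finset.range (m + 1),
      -(-1 : ℝ) ^ i * (t ^ (2 * i + 1 + 1) / (2 * i + 1 + 1).factorial) := by
  rw [cosSum, Finset.sum_range_succ', add_comm]
  simp only [mul_add, mul_one, mul_div_assoc, pow_succ, mul_neg]
  simp

lemma hasDerivAt_cosSum_succ (m : ℕ) (t : ℝ) :
    HasDerivAt (cosSum (m + 1)) (-sinSum m t) t := by
  rw [funext (cosSum_succ_eq m), sinSum, ← Finset.sum_neg_distrib]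
  refine HasDerivAt.const_add _ (HasDerivAt.fun_sum fun i _ => ?_)
  simpa only [mul_div_assoc, neg_mul] using
    (hasDerivAt_pow_succ_div_factorial (2 * i + 1) t).const_mul (-(-1 : ℝ) ^ i)

lemma nonneg_of_hasDerivAt_nonneg {f f' : ℝ → ℝ} (hf : ∀ t, HasDerivAt f (f' t) t)
    (hf' : ∀ t, 0 ≤ t → 0 ≤ f' t) (h0 : f 0 = 0) {t : ℝ} (ht : 0 ≤ t) : 0 ≤ f t := by
  have hmono : MonotoneOn f (Set.Ici 0) := by
    refine monotoneOn_of_deriv_nonneg (convex_Ici 0)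
      (fun x _ => (hf x).continuousAt.continuousWithinAt)
      (fun x _ => (hf x).differentiableAt.differentiableWithinAt) fun x hx => ?_
    rw [(hf x).deriv]
    exact hf' x (interior_subset hx)
  simpa [h0] using hmono Set.self_mem_Ici ht ht

/-- On the nonnegative half-line the Maclaurin polynomials of `cos` and `sin` whose last summand has
index `m` bound the function from above for even `m` and from below for odd `m`. -/
lemma maclaurin_error_nonneg (m : ℕ) :
    (∀ t : ℝ, 0 ≤ t → 0 ≤ (-1) ^ m * (cosSum m t - Real.cos t)) ∧
      ∀ t : ℝ, 0 ≤ t → 0 ≤ (-1) ^ m * (sinSum m t - Real.sin t) := by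
  -- The bound for `sin` comes from the bound for `cos` with the same `m`.
  have hsin (m : ℕ) (h : ∀ t : ℝ, 0 ≤ t → 0 ≤ (-1) ^ m * (cosSum m t - Real.cos t)) :
      ∀ t : ℝ, 0 ≤ t → 0 ≤ (-1) ^ m * (sinSum m t - Real.sin t) := fun t ht =>
    nonneg_of_hasDerivAt_nonneg
      (f := fun t => (-1) ^ m * (sinSum m t - Real.sin t))
      (fun t => ((hasDerivAt_sinSum m t).sub (Real.hasDerivAt_sin t)).const_mul _) h
      (by simp [sinSum]) ht
  induction m with
  | zero =>
    have h : ∀ t : ℝ, 0 ≤ t → 0 ≤ (-1) ^ 0 * (cosSum 0 t - Real.cos t) := fun t _ => by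
      simpa [cosSum] using Real.cos_le_one t
    exact ⟨h, hsin 0 h⟩
  | succ m ih =>
    have h : ∀ t : ℝ, 0 ≤ t → 0 ≤ (-1) ^ (m + 1) * (cosSum (m + 1) t - Real.cos t) :=
      fun t ht => nonneg_of_hasDerivAt_nonneg
        (f := fun t => (-1) ^ (m + 1) * (cosSum (m + 1) t - Real.cos t))
        (fun t => ((hasDerivAt_cosSum_succ m t).sub (Real.hasDerivAt_cos t)).const_mul _)
        (fun t ht => by
          have := ih.2 t ht
          rw [pow_succ]
          linarith)
        (by simp [cosSum_succ_eq]) ht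
    exact ⟨h, hsin (m + 1) h⟩

lemma cos_le_cosSum {m : ℕ} (hm : Even m) (t : ℝ) : Real.cos t ≤ cosSum m t := by
  have h := (maclaurin_error_nonneg m).1 |t| (abs_nonneg t)
  have habs : cosSum m |t| = cosSum m t := by simp [cosSum, pow_mul]
  rw [hm.neg_one_pow, one_mul, Real.cos_abs, habs] at h
  linarith

theorem stmt_2 (k : ℕ) (n : ℕ) (hn : n = 4 * k) :
    ∀ t ∈ Set.Icc (-Real.sqrt (((n : ℝ) + 3) * ((n : ℝ) + 4)))
        (Real.sqrt (((n : ℝ) + 3) * ((n : ℝ) + 4))),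
      cosTaylor n t ≥ cosTaylor (n + 4) t ∧ cosTaylor (n + 4) t ≥ Real.cos t := by
  intro t ht
  constructor
  · have hsq : t ^ 2 ≤ ((n : ℝ) + 3) * ((n : ℝ) + 4) := by
      rw [← Real.sqrt_le_sqrt_iff (by positivity), Real.sqrt_sq_eq_abs]
      exact abs_le.2 ht
    have hpow : 0 ≤ t ^ (n + 2) := Even.pow_nonneg ⟨2 * k + 1, by omega⟩ t
    have hfac : ((n + 4).factorial : ℝ) =
        ((n : ℝ) + 3) * ((n : ℝ) + 4) * (n + 2).factorial := by
      rw [Nat.factorial_succ, Nat.factorial_succ]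
      push_cast
      ring
    have hterm : t ^ (n + 4) / (n + 4).factorial ≤ t ^ (n + 2) / (n + 2).factorial := by
      rw [hfac, div_le_div_iff₀ (by positivity) (by positivity)]
      calc t ^ (n + 4) * (n + 2).factorial = t ^ (n + 2) * (n + 2).factorial * t ^ 2 := by ring
        _ ≤ t ^ (n + 2) * (n + 2).factorial * (((n : ℝ) + 3) * ((n : ℝ) + 4)) := by gcongr
        _ = _ := by ring
    have hstep : cosTaylor (n + 4) t =
        cosTaylor n t - t ^ (n + 2) / (n + 2).factorial + t ^ (n + 4) / (n + 4).factorial := by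
      have e1 : (n + 4) / 2 + 1 = n / 2 + 1 + 1 + 1 := by omega
      have e2 : 2 * (n / 2 + 1) = n + 2 := by omega
      have e3 : 2 * (n / 2 + 1 + 1) = n + 4 := by omega
      have hev : Even (n / 2) := ⟨k, by omega⟩
      rw [cosTaylor, e1, Finset.sum_range_succ, Finset.sum_range_succ, e2, e3,
        hev.add_one.neg_one_pow, (hev.add even_two).neg_one_pow, cosTaylor]
      ring
    linarith
  · exact cos_le_cosSum (m := (n + 4) / 2) ⟨k + 1, by omega⟩ t
end
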